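/- Let X be a subspace of X_p, let U be a subspace of X with h(U) ≥ β' for some β' with 0 < β' ≤ 1, and let Q be a bounded projection from X onto U which is orthogonal with respect to ⟨·,·⟩ (i.e., ⟨Qx, x − Qx⟩ = 0 for all x ∈ X). Then for every nonzero x ∈ X, ‖Qx‖ ≤ ‖Q‖^{1/2} · r(x)^{1/2} · ‖x‖ / β'. -/

import Mathlib

open scoped ENNReal

noncomputable section

/-- The sequence space `ℓ_p` (of real sequences), for a real exponent `p`. -/
abbrev SeqP (p : ℝ) := lp (fun _ : ℕ => ℝ) (ENNReal.ofReal p)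

/-- The sequence space `ℓ_2` (of real sequences). -/
abbrev Seq2 := lp (fun _ : ℕ => ℝ) 2

/-- The space `X_{p,w}`, realized as the submodule of `ℓ_p ⊕_∞ ℓ_2` consisting of the
pairs `(x, y)` with `y n = w n * x n`.  Since the norm on the product is the maximum of
the two norms, this is exactly the completion of the finitely supported sequences under
`‖a‖ = max {|a|_p, |a|_{2,w}}`, the element with coordinates `a` being identified with
the pair `(a, w·a)`. -/
def XpwMod (p : ℝ) (w : ℕ → ℝ) : Submodule ℝ (SeqP p × Seq2) where
  carrier := {z | ∀ n, (z.2 : ℕ → ℝ) n = w n * (z.1 : ℕ → ℝ) n}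
  add_mem' := by
    intro a b ha hb n
    simp only [Prod.fst_add, Prod.snd_add, lp.coeFn_add, Pi.add_apply, ha n, hb n]
    ring
  zero_mem' := by
    intro n
    simp
  smul_mem' := by
    intro c a ha n
    simp only [Prod.smul_fst, Prod.smul_snd, lp.coeFn_smul, Pi.smul_apply, ha n,
      smul_eq_mul]
    ring

/-- The space `X_{p,w}` with its natural norm `‖a‖ = max {|a|_p, |a|_{2,w}}`. -/
def Xpw (p : ℝ) (w : ℕ → ℝ) : Type := ↥(XpwMod p w)

variable {p : ℝ} {w : ℕ → ℝ}

instance [Fact (1 ≤ ENNReal.ofReal p)] : NormedAddCommGroup (Xpw p w) :=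
  inferInstanceAs (NormedAddCommGroup ↥(XpwMod p w))

instance [Fact (1 ≤ ENNReal.ofReal p)] : NormedSpace ℝ (Xpw p w) :=
  inferInstanceAs (NormedSpace ℝ ↥(XpwMod p w))

/-- The pair of coordinates (in `ℓ_p` and in weighted `ℓ_2`) of an element of `X_{p,w}`. -/
def Xpw.pair (x : Xpw p w) : SeqP p × Seq2 := (show ↥(XpwMod p w) from x).val

/-- The underlying sequence of coordinates of an element of `X_{p,w}`. -/
def seq (x : Xpw p w) : ℕ → ℝ := (Xpw.pair x).1

/-- `|x|_p` for `x ∈ X_{p,w}`. -/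
def nrmP (x : Xpw p w) : ℝ := ‖(Xpw.pair x).1‖

/-- `|x|_2 = |x|_{2,w}` for `x ∈ X_{p,w}`. -/
def nrm2 (x : Xpw p w) : ℝ := ‖(Xpw.pair x).2‖

/-- The ratio `r(x) = |x|_2 / |x|_p`. -/
def ratio (x : Xpw p w) : ℝ := nrm2 x / nrmP x

/-- `ω(E) = ∑_{n ∈ E} w_n^{2p/(p-2)}`. -/
def omegaE (p : ℝ) (w : ℕ → ℝ) (E : Set ℕ) : ℝ :=
  ∑' n : E, w (n : ℕ) ^ (2 * p / (p - 2))

/-- The pairing `⟨x, y⟩ = ∑_n x_n y_n w_n²`. -/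
def pairW (w : ℕ → ℝ) (x y : Xpw p w) : ℝ :=
  ∑' n, seq x n * seq y n * w n ^ 2

/-- `w` is a weight sequence suitable for Rosenthal's space `X_p`: it is positive and for
every `ε > 0`, `∑_{w_n < ε} w_n^{2p/(p-2)} = ∞`. -/
def IsXpWeight (p : ℝ) (w : ℕ → ℝ) : Prop :=
  (∀ n, 0 < w n) ∧
    ∀ ε : ℝ, 0 < ε →
      (∑' n : {n : ℕ | w n < ε}, ENNReal.ofReal (w (n : ℕ) ^ (2 * p / (p - 2)))) = ⊤

theorem memℓp_indicator {q : ℝ≥0∞} (E : Set ℕ) {f : ℕ → ℝ} (hf : Memℓp f q) :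
    Memℓp (E.indicator f) q := by
  rcases ENNReal.trichotomy q with hq | hq | hq
  · subst hq
    refine memℓp_zero ((memℓp_zero_iff.mp hf).subset ?_)
    intro i hi
    simp only [Set.mem_setOf_eq] at hi ⊢
    intro h
    exact hi (by simp [Set.indicator_apply, h])
  · subst hq
    obtain ⟨C, hC⟩ := (memℓp_infty_iff.mp hf)
    refine memℓp_infty ⟨C, ?_⟩
    rintro x ⟨i, rfl⟩
    exact le_trans (norm_indicator_le_norm_self f i) (hC ⟨i, rfl⟩)
  · refine memℓp_gen (Summable.of_nonneg_of_le (fun i => ?_) (fun i => ?_)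
      (hf.summable hq))
    · positivity
    · exact Real.rpow_le_rpow (norm_nonneg _) (norm_indicator_le_norm_self f i) hq.le

/-- The restriction `x ↦ x_{|E}` of elements of `X_{p,w}` to a set `E` of coordinates. -/
def restrict (E : Set ℕ) (x : Xpw p w) : Xpw p w :=
  show ↥(XpwMod p w) from
  ⟨(⟨E.indicator ((Xpw.pair x).1 : ℕ → ℝ), memℓp_indicator E (lp.memℓp (Xpw.pair x).1)⟩,
    ⟨E.indicator ((Xpw.pair x).2 : ℕ → ℝ), memℓp_indicator E (lp.memℓp (Xpw.pair x).2)⟩), by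
    intro n
    by_cases hn : n ∈ E
    · have hx : ((Xpw.pair x).2 : ℕ → ℝ) n = w n * ((Xpw.pair x).1 : ℕ → ℝ) n :=
        (show ↥(XpwMod p w) from x).2 n
      simpa [Set.indicator_of_mem hn] using hx
    · simp [Set.indicator_of_notMem hn]⟩

/-!
Everything rests on the identity `|x|_2 = min {r(x), 1} ‖x‖`. For `u = Qx ≠ 0`, where
`r(u) ≥ β'` and `1 ≥ β'`, it gives `β' ‖u‖ ≤ |u|_2`; orthogonality gives `|u|_2 ≤ |x|_2` by
Pythagoras; and `min {r(x), 1} ≤ r(x)^θ` for every `0 ≤ θ ≤ 1`. Hence `β' ‖Qx‖ ≤ r(x)^θ ‖x‖`. The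
factor `‖Q‖^{1/2}` comes for free, a nonzero idempotent operator having norm at least `1`.
-/

theorem min_one_le_rpow {r θ : ℝ} (hr : 0 ≤ r) (hθ0 : 0 ≤ θ) (hθ1 : θ ≤ 1) :
    min r 1 ≤ r ^ θ := by
  rcases le_total r 1 with h | h
  · exact (min_le_left r 1).trans (Real.self_le_rpow_of_le_one hr h hθ1)
  · exact (min_le_right r 1).trans (Real.one_le_rpow h hθ0)

theorem norm_le_norm_of_inner_sub_eq_zero {E : Type*} [SeminormedAddCommGroup E]
    [InnerProductSpace ℝ E] {x q : E} (h : inner ℝ q (x - q) = 0) : ‖q‖ ≤ ‖x‖ := by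
  have pythagoras := norm_add_sq_eq_norm_sq_add_norm_sq_real h
  rw [add_sub_cancel] at pythagoras
  refine (mul_self_le_mul_self_iff (norm_nonneg q) (norm_nonneg x)).mpr ?_
  linarith [mul_self_nonneg ‖x - q‖]

theorem norm_le_opNorm_rpow_mul_norm_of_apply_eq {𝕜 E : Type*} [NontriviallyNormedField 𝕜]
    [SeminormedAddCommGroup E] [NormedSpace 𝕜 E] (T : E →L[𝕜] E) {y : E} (hy : T y = y)
    {s : ℝ} (hs : 0 ≤ s) : ‖y‖ ≤ ‖T‖ ^ s * ‖y‖ := by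
  rcases (norm_nonneg y).eq_or_lt with h0 | hpos
  · simp [← h0]
  have one_le_opNorm : 1 ≤ ‖T‖ := by
    refine le_of_mul_le_mul_right ?_ hpos
    simpa only [one_mul, hy] using T.le_opNorm y
  exact le_mul_of_one_le_left hpos.le (Real.one_le_rpow one_le_opNorm hs)

theorem pair_snd_apply (x : Xpw p w) (n : ℕ) :
    ((Xpw.pair x).2 : ℕ → ℝ) n = w n * seq x n :=
  (show ↥(XpwMod p w) from x).2 n

theorem pairW_eq_inner (x y : Xpw p w) :
    pairW w x y = inner ℝ (Xpw.pair x).2 (Xpw.pair y).2 := by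
  rw [pairW, lp.inner_eq_tsum]
  refine tsum_congr fun n => ?_
  rw [pair_snd_apply, pair_snd_apply, Real.inner_apply]
  ring

theorem ratio_nonneg (x : Xpw p w) : 0 ≤ ratio x :=
  div_nonneg (norm_nonneg _) (lp.norm_nonneg' _)

section

variable [Fact (1 ≤ ENNReal.ofReal p)]

theorem norm_eq_max (x : Xpw p w) : ‖x‖ = max (nrmP x) (nrm2 x) := rfl

theorem nrmP_pos {x : Xpw p w} (hx : x ≠ 0) : 0 < nrmP x := by
  refine norm_pos_iff.mpr fun hfst => hx ?_
  have hsnd : (Xpw.pair x).2 = 0 := by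
    ext n
    simp [pair_snd_apply, seq, hfst]
  exact Subtype.ext (Prod.ext hfst hsnd)

theorem nrm2_eq_min_ratio_one_mul_norm {x : Xpw p w} (hx : x ≠ 0) :
    nrm2 x = min (ratio x) 1 * ‖x‖ := by
  have hP := nrmP_pos hx
  rw [norm_eq_max, ratio]
  rcases le_total (nrm2 x) (nrmP x) with h | h
  · rw [max_eq_left h, min_eq_left ((div_le_one hP).mpr h), div_mul_cancel₀ _ hP.ne']
  · rw [max_eq_right h, min_eq_right ((one_le_div hP).mpr h), one_mul]

theorem nrm2_le_nrm2_of_pairW_sub_eq_zero {x q : Xpw p w} (h : pairW w q (x - q) = 0) :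
    nrm2 q ≤ nrm2 x :=
  norm_le_norm_of_inner_sub_eq_zero ((pairW_eq_inner q (x - q)).symm.trans h)

theorem mul_norm_le_nrm2 {β : ℝ} (hβ : β ≤ 1) {u : Xpw p w} (hu : u ≠ 0 → β ≤ ratio u) :
    β * ‖u‖ ≤ nrm2 u := by
  by_cases h0 : u = 0
  · rw [h0, norm_zero, mul_zero]
    exact norm_nonneg _
  · rw [nrm2_eq_min_ratio_one_mul_norm h0]
    gcongr
    exact le_min (hu h0) hβ

theorem nrm2_le_ratio_rpow_mul_norm {x : Xpw p w} (hx : x ≠ 0) {θ : ℝ} (hθ0 : 0 ≤ θ)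
    (hθ1 : θ ≤ 1) : nrm2 x ≤ ratio x ^ θ * ‖x‖ := by
  rw [nrm2_eq_min_ratio_one_mul_norm hx]
  gcongr
  exact min_one_le_rpow (ratio_nonneg x) hθ0 hθ1

theorem stmt19_general {β : ℝ} (hβ0 : 0 < β) (hβ1 : β ≤ 1) {x q : Xpw p w} (hx : x ≠ 0)
    (hq : q ≠ 0 → β ≤ ratio q) (horth : pairW w q (x - q) = 0) {θ : ℝ} (hθ0 : 0 ≤ θ)
    (hθ1 : θ ≤ 1) : ‖q‖ ≤ ratio x ^ θ * ‖x‖ / β := by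
  rw [le_div_iff₀' hβ0]
  calc β * ‖q‖ ≤ nrm2 q := mul_norm_le_nrm2 hβ1 hq
    _ ≤ nrm2 x := nrm2_le_nrm2_of_pairW_sub_eq_zero horth
    _ ≤ ratio x ^ θ * ‖x‖ := nrm2_le_ratio_rpow_mul_norm hx hθ0 hθ1

end

/-- key estimate in Proposition 2.6: if `U ⊆ X ⊆ X_p` with
`h(U) ≥ β'` for some `0 < β' ≤ 1`, and `Q` is a bounded projection from `X` onto `U`
which is orthogonal with respect to `⟨·,·⟩`, then for every nonzero `x ∈ X`,
`‖Qx‖ ≤ ‖Q‖^{1/2} r(x)^{1/2} ‖x‖ / β'`. -/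
theorem stmt19 (p : ℝ) (hp : 2 < p) [Fact (1 ≤ ENNReal.ofReal p)]
    (w : ℕ → ℝ) (hw : IsXpWeight p w)
    (X U : Submodule ℝ (Xpw p w)) (hUX : U ≤ X)
    (β' : ℝ) (hβ'0 : 0 < β') (hβ'1 : β' ≤ 1)
    (hU : ∀ u ∈ U, u ≠ 0 → ratio u ≥ β')
    (Q : ↥X →L[ℝ] ↥X)
    (hQU : ∀ x : ↥X, (Q x : Xpw p w) ∈ U)
    (hQid : ∀ x : ↥X, (x : Xpw p w) ∈ U → Q x = x)
    (horth : ∀ x : ↥X, pairW w ((Q x : Xpw p w)) ((x : Xpw p w) - (Q x : Xpw p w)) = 0) :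
    ∀ x : ↥X, x ≠ 0 →
      ‖Q x‖ ≤ ‖Q‖ ^ ((1 : ℝ) / 2) * ratio (x : Xpw p w) ^ ((1 : ℝ) / 2) * ‖x‖ / β' := by
  intro x hx
  have hQx := stmt19_general hβ'0 hβ'1 (Submodule.coe_eq_zero.not.mpr hx) (hU _ (hQU x)) (horth x)
    one_half_pos.le one_half_lt_one.le
  rw [mul_assoc, mul_div_assoc]
  exact (norm_le_opNorm_rpow_mul_norm_of_apply_eq Q (hQid _ (hQU x)) one_half_pos.le).trans
    (mul_le_mul_of_nonneg_left hQx (by positivity))
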